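/- Let W : GL⁺(2) → ℝ be objective, isotropic and isochoric, and let f : [0,∞) → ℝ be the function defined by f(θ) = W(diag(exp(√θ), 1)). If f is twice continuously differentiable on [0,∞), then the following are equivalent: (i) W is polyconvex; (ii) W is rank-one convex; (iii) 2θ·f''(θ) + (1 − √θ)·f'(θ) ≥ 0 for all θ > 0. -/

import Mathlib

open Matrix Set

noncomputable section

/-- The space of real 2×2 matrices. -/
abbrev Mat2 : Type := Matrix (Fin 2) (Fin 2) ℝ

/-- The special orthogonal group SO(2): orthogonal 2×2 matrices with determinant 1. -/
def SO2 : Set Mat2 := {Q : Mat2 | Qᵀ * Q = 1 ∧ Q.det = 1}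

/-- A function `W` (viewed on GL⁺(2) = {F | 0 < det F}) is polyconvex if there is a
convex function `P : ℝ^{2×2} × ℝ → ℝ ∪ {+∞}` with `W F = P (F, det F)` on GL⁺(2). -/
def Polyconvex (W : Mat2 → ℝ) : Prop :=
  ∃ P : Mat2 × ℝ → EReal,
    (∀ x y : Mat2 × ℝ, ∀ a b : ℝ, 0 ≤ a → 0 ≤ b → a + b = 1 →
      P (a • x + b • y) ≤ (a : EReal) * P x + (b : EReal) * P y) ∧
    (∀ F : Mat2, 0 < F.det → (W F : EReal) = P (F, F.det))

/-- Rank-one convexity of `W` on GL⁺(2): convexity along rank-one line segments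
lying in GL⁺(2). -/
def RankOneConvex (W : Mat2 → ℝ) : Prop :=
  ∀ F : Mat2, 0 < F.det → ∀ ξ η : Fin 2 → ℝ, ∀ θ : ℝ, θ ∈ Set.Icc (0:ℝ) 1 →
    (∀ t ∈ Set.Icc (0:ℝ) 1, 0 < (F + t • vecMulVec ξ η).det) →
    W (F + (1 - θ) • vecMulVec ξ η) ≤ θ * W F + (1 - θ) * W (F + vecMulVec ξ η)

/-- Objectivity and isotropy: bi-SO(2)-invariance on GL⁺(2). -/
def ObjectiveIsotropic (W : Mat2 → ℝ) : Prop :=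
  ∀ F : Mat2, 0 < F.det → ∀ Q₁ Q₂ : Mat2, Q₁ ∈ SO2 → Q₂ ∈ SO2 →
    W (Q₁ * F * Q₂) = W F

/-- Isochoric: invariance under positive scaling on GL⁺(2). -/
def Isochoric (W : Mat2 → ℝ) : Prop :=
  ∀ F : Mat2, 0 < F.det → ∀ a : ℝ, 0 < a → W (a • F) = W F

/-- The 2×2 diagonal matrix diag(a, b). -/
def diag2 (a b : ℝ) : Mat2 := !![a, 0; 0, b]

/-- The squared Frobenius norm of a 2×2 matrix. -/
def frobSq (F : Mat2) : ℝ := ∑ i, ∑ j, (F i j) ^ 2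

/-- The operator norm of `F` induced by the Euclidean norm on ℝ²:
the supremum of ‖F·x‖ over Euclidean-unit vectors x. -/
def opNorm2 (F : Mat2) : ℝ :=
  sSup {r : ℝ | ∃ x : Fin 2 → ℝ, (x 0) ^ 2 + (x 1) ^ 2 = 1 ∧
    r = Real.sqrt ((F.mulVec x 0) ^ 2 + (F.mulVec x 1) ^ 2)}

def hh (f : ℝ → ℝ) (t : ℝ) : ℝ := f ((Real.log t) ^ 2)

def R2 (p : ℝ) : Mat2 := !![Real.cos p, -Real.sin p; Real.sin p, Real.cos p]

lemma R2_mem (p : ℝ) : R2 p ∈ SO2 := by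
  constructor
  · ext i j
    fin_cases i <;> fin_cases j <;> simp [R2, Matrix.mul_apply, Fin.sum_univ_two] <;>
      nlinarith [Real.sin_sq_add_cos_sq p]
  · simp [R2, Matrix.det_fin_two]
    nlinarith [Real.sin_sq_add_cos_sq p]

def pz (F : Mat2) : ℂ := ⟨F 0 0 + F 1 1, F 1 0 - F 0 1⟩
def qz (F : Mat2) : ℂ := ⟨F 0 0 - F 1 1, F 1 0 + F 0 1⟩
/-- largest singular value -/
def nn (F : Mat2) : ℝ := (‖pz F‖ + ‖qz F‖) / 2

lemma nn_nonneg (F : Mat2) : 0 ≤ nn F := by unfold nn; positivity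

lemma nn_convex (F G : Mat2) (a b : ℝ) (ha : 0 ≤ a) (hb : 0 ≤ b) :
    nn (a • F + b • G) ≤ a * nn F + b * nn G := by
  have h1 : pz (a • F + b • G) = a • pz F + b • pz G := by
    apply Complex.ext <;> simp [pz] <;> ring
  have h2 : qz (a • F + b • G) = a • qz F + b • qz G := by
    apply Complex.ext <;> simp [qz] <;> ring
  have e1 := norm_add_le (a • pz F) (b • pz G)
  have e2 := norm_add_le (a • qz F) (b • qz G)
  rw [norm_smul, norm_smul, Real.norm_of_nonneg ha, Real.norm_of_nonneg hb] at e1 e2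
  unfold nn
  rw [h1, h2]
  linarith

lemma det_eq (F : Mat2) : F.det = (‖pz F‖ + ‖qz F‖) / 2 * ((‖pz F‖ - ‖qz F‖) / 2) := by
  have h1 : ‖pz F‖ ^ 2 = (F 0 0 + F 1 1) ^ 2 + (F 1 0 - F 0 1) ^ 2 := by
    rw [Complex.sq_norm, Complex.normSq_apply]; simp [pz]; ring
  have h2 : ‖qz F‖ ^ 2 = (F 0 0 - F 1 1) ^ 2 + (F 1 0 + F 0 1) ^ 2 := by
    rw [Complex.sq_norm, Complex.normSq_apply]; simp [qz]; ring
  rw [Matrix.det_fin_two]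
  nlinarith

lemma svd (F : Mat2) : ∃ u v : ℝ,
    F = R2 u * diag2 ((‖pz F‖ + ‖qz F‖) / 2) ((‖pz F‖ - ‖qz F‖) / 2) * R2 v := by
  set A := Complex.arg (pz F) with hA
  set B := Complex.arg (qz F) with hB
  have a1 : ‖pz F‖ * Real.cos A = F 0 0 + F 1 1 := Complex.norm_mul_cos_arg _
  have a2 : ‖pz F‖ * Real.sin A = F 1 0 - F 0 1 := Complex.norm_mul_sin_arg _
  have b1 : ‖qz F‖ * Real.cos B = F 0 0 - F 1 1 := Complex.norm_mul_cos_arg _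
  have b2 : ‖qz F‖ * Real.sin B = F 1 0 + F 0 1 := Complex.norm_mul_sin_arg _
  refine ⟨(A + B) / 2, (A - B) / 2, ?_⟩
  have eA : A = (A + B) / 2 + (A - B) / 2 := by ring
  have eB : B = (A + B) / 2 - (A - B) / 2 := by ring
  clear_value A B
  set u := (A + B) / 2
  set v := (A - B) / 2
  rw [eA, Real.cos_add] at a1
  rw [eA, Real.sin_add] at a2
  rw [eB, Real.cos_sub] at b1
  rw [eB, Real.sin_sub] at b2
  ext i j
  fin_cases i <;> fin_cases j <;>
    simp [R2, diag2, Matrix.mul_apply, Fin.sum_univ_two] <;> linarith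

lemma W_eq (W : Mat2 → ℝ) (hOI : ObjectiveIsotropic W) (hIso : Isochoric W)
    (f : ℝ → ℝ) (hf : ∀ θ : ℝ, f θ = W (diag2 (Real.exp (Real.sqrt θ)) 1))
    (F : Mat2) (hF : 0 < F.det) :
    1 ≤ nn F ^ 2 / F.det ∧ W F = hh f (nn F ^ 2 / F.det) := by
  have hd := det_eq F
  obtain ⟨u, v, huv⟩ := svd F
  have hx0 := nn_nonneg F
  have hq : 0 ≤ ‖qz F‖ := norm_nonneg _
  have hn : nn F = (‖pz F‖ + ‖qz F‖) / 2 := rfl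
  rw [← hn] at hd huv
  set x := nn F
  set y := (‖pz F‖ - ‖qz F‖) / 2 with hy
  have hxy : y ≤ x := by rw [hn, hy]; linarith
  clear_value x y
  have hypos : 0 < y := by
    by_contra h
    push Not at h
    nlinarith
  have hxpos : 0 < x := by linarith
  have e : x ^ 2 / F.det = x / y := by rw [hd]; field_simp
  have h1 : 1 ≤ x / y := by rw [le_div_iff₀ hypos]; linarith
  refine ⟨by rw [e]; exact h1, ?_⟩
  rw [e]
  have hdet : 0 < (diag2 (x / y) 1).det := by
    simp [diag2, Matrix.det_fin_two]; positivity
  have hdet2 : 0 < (diag2 x y).det := by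
    simp [diag2, Matrix.det_fin_two]; positivity
  have hs : diag2 x y = y • diag2 (x / y) 1 := by
    ext i j
    fin_cases i <;> fin_cases j <;> simp [diag2]; field_simp
  rw [huv, hOI _ hdet2 _ _ (R2_mem u) (R2_mem v), hs, hIso _ hdet _ hypos]
  unfold hh
  rw [hf, Real.sqrt_sq (Real.log_nonneg h1), Real.exp_log (by positivity)]

lemma W_diag (W : Mat2 → ℝ)
    (f : ℝ → ℝ) (hf : ∀ θ : ℝ, f θ = W (diag2 (Real.exp (Real.sqrt θ)) 1))
    (t : ℝ) (h1 : 1 ≤ t) : W (diag2 t 1) = hh f t := by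
  unfold hh
  rw [hf, Real.sqrt_sq (Real.log_nonneg h1), Real.exp_log (by positivity)]

lemma log_pos' {t : ℝ} (ht : 1 < t) : 0 < (Real.log t) ^ 2 := by
  have := Real.log_pos ht
  positivity

lemma f_d1 (f : ℝ → ℝ) (hC2 : ContDiffOn ℝ 2 f (Set.Ici (0:ℝ))) (x : ℝ) (hx : 0 < x) :
    HasDerivAt f (deriv f x) x ∧ HasDerivAt (deriv f) (deriv (deriv f) x) x := by
  have h : ContDiffAt ℝ 2 f x := hC2.contDiffAt (Ici_mem_nhds hx)
  have h1 := h.differentiableAt (by norm_num)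
  have h2 : ContDiffAt ℝ 1 (deriv f) x := by
    exact h.derivWithin (by norm_num)
  exact ⟨h1.hasDerivAt, (h2.differentiableAt (by norm_num)).hasDerivAt⟩

lemma hh_d1 (f : ℝ → ℝ) (hC2 : ContDiffOn ℝ 2 f (Set.Ici (0:ℝ))) (t : ℝ) (ht : 1 < t) :
    HasDerivAt (hh f) (deriv f ((Real.log t) ^ 2) * (2 * Real.log t * t⁻¹)) t := by
  have h := (f_d1 f hC2 _ (log_pos' ht)).1
  have hl : HasDerivAt (fun t => (Real.log t) ^ 2) (2 * Real.log t * t⁻¹) t := by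
    exact ((Real.hasDerivAt_log (by linarith : t ≠ 0)).pow 2).congr_deriv (by simp)
  exact h.comp t hl

lemma hh_d2 (f : ℝ → ℝ) (hC2 : ContDiffOn ℝ 2 f (Set.Ici (0:ℝ))) (t : ℝ) (ht : 1 < t) :
    HasDerivAt (deriv (hh f)) (2 / t ^ 2 * (2 * (Real.log t) ^ 2 * deriv (deriv f) ((Real.log t) ^ 2)
      + (1 - Real.sqrt ((Real.log t) ^ 2)) * deriv f ((Real.log t) ^ 2))) t := by
  have h := (f_d1 f hC2 _ (log_pos' ht)).2
  have h0 : t ≠ 0 := by linarith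
  have hlog := Real.hasDerivAt_log h0
  have hl : HasDerivAt (fun t => (Real.log t) ^ 2) (2 * Real.log t * t⁻¹) t := by
    exact (hlog.pow 2).congr_deriv (by simp)
  have h3 := (h.comp t hl).mul ((hlog.const_mul 2).mul (hasDerivAt_inv h0))
  rw [Real.sqrt_sq (Real.log_pos ht).le]
  have ev : deriv (hh f) =ᶠ[nhds t] fun t => deriv f ((Real.log t) ^ 2) * (2 * Real.log t * t⁻¹) := by
    filter_upwards [Ioi_mem_nhds ht] with s hs
    exact (hh_d1 f hC2 s hs).deriv
  refine HasDerivAt.congr_of_eventuallyEq ?_ ev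
  refine h3.congr_deriv ?_
  simp only [Function.comp, Pi.mul_apply]
  field_simp
  ring

lemma hh_conv (f : ℝ → ℝ) (hC2 : ContDiffOn ℝ 2 f (Set.Ici (0:ℝ)))
    (h : ∀ θ : ℝ, 0 < θ →
         0 ≤ 2 * θ * deriv (deriv f) θ + (1 - Real.sqrt θ) * deriv f θ) :
    ConvexOn ℝ (Ici 1) (hh f) := by
  apply convexOn_of_deriv2_nonneg (convex_Ici 1)
  · unfold hh
    refine hC2.continuousOn.comp (t := Ici 0) (f := fun t => (Real.log t) ^ 2) ?_ ?_
    · intro t ht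
      have : t ≠ 0 := by have : (1:ℝ) ≤ t := ht
                         linarith
      exact ((Real.continuousAt_log this).pow 2).continuousWithinAt
    · intro t _
      exact sq_nonneg (Real.log t)
  · rw [interior_Ici]
    intro t ht
    exact (hh_d1 f hC2 t ht).differentiableAt.differentiableWithinAt
  · rw [interior_Ici]
    intro t ht
    exact (hh_d2 f hC2 t ht).differentiableAt.differentiableWithinAt
  · rw [interior_Ici]
    intro t ht
    simp only [Function.iterate_succ, Function.iterate_zero, Function.comp, id]
    rw [(hh_d2 f hC2 t ht).deriv]
    have := h _ (log_pos' ht)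
    positivity

lemma hh_mono (f : ℝ → ℝ) (hC2 : ContDiffOn ℝ 2 f (Set.Ici (0:ℝ)))
    (hc : ConvexOn ℝ (Ici 1) (hh f)) : MonotoneOn (hh f) (Ici 1) := by
  have hd : HasDerivWithinAt (hh f) 0 (Ici 1) 1 := by
    have hl : HasDerivWithinAt (fun t => (Real.log t) ^ 2) 0 (Ici 1) 1 := by
      exact (((Real.hasDerivAt_log one_ne_zero).pow 2).congr_deriv (by simp)).hasDerivWithinAt
    have h1 : DifferentiableWithinAt ℝ f (Ici 0) ((Real.log 1) ^ 2) :=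
      hC2.differentiableOn (by norm_num) _ (by simp)
    have := h1.hasDerivWithinAt.comp (1:ℝ) hl (fun t _ => sq_nonneg (Real.log t))
    rw [mul_zero] at this
    exact this
  have hmin : ∀ y, 1 < y → hh f 1 ≤ hh f y := by
    intro y hy
    have := hc.le_slope_of_hasDerivWithinAt (x := 1) (y := y) (by simp) hy.le hy hd
    rw [slope_def_field, le_div_iff₀ (by linarith)] at this
    linarith
  intro x hx y hy hxy
  have hx : (1:ℝ) ≤ x := hx
  have hy : (1:ℝ) ≤ y := hy
  rcases hx.eq_or_lt with rfl | hx1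
  · rcases hy.eq_or_lt with rfl | hy1
    · exact le_rfl
    · exact hmin y hy1
  · have := hc.le_max_of_mem_Icc (x := 1) (y := y) (z := x) (by simp) hy ⟨hx, hxy⟩
    rwa [max_eq_right (hmin y (by linarith))] at this

lemma poly_imp (W : Mat2 → ℝ) (h : Polyconvex W) : RankOneConvex W := by
  obtain ⟨P, hP, hW⟩ := h
  intro F hF ξ η θ hθ hdet
  have h1 := hdet 1 (by simp)
  have hm := hdet (1 - θ) ⟨by linarith [hθ.2], by linarith [hθ.1]⟩
  rw [one_smul] at h1
  have key := hP (F, F.det) (F + vecMulVec ξ η, (F + vecMulVec ξ η).det) θ (1 - θ) hθ.1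
    (by linarith [hθ.2]) (by ring)
  have e : θ • (F, F.det) + (1 - θ) • (F + vecMulVec ξ η, (F + vecMulVec ξ η).det)
      = (F + (1 - θ) • vecMulVec ξ η, (F + (1 - θ) • vecMulVec ξ η).det) := by
    refine Prod.ext ?_ ?_
    · ext i j
      simp; ring
    · simp [Matrix.det_fin_two, vecMulVec_apply]; ring
  rw [e, ← hW _ hF, ← hW _ h1, ← hW _ hm] at key
  exact_mod_cast key

lemma rank_imp (W : Mat2 → ℝ)
    (f : ℝ → ℝ) (hf : ∀ θ : ℝ, f θ = W (diag2 (Real.exp (Real.sqrt θ)) 1))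
    (hC2 : ContDiffOn ℝ 2 f (Set.Ici (0:ℝ))) (h : RankOneConvex W) :
    ∀ θ : ℝ, 0 < θ → 0 ≤ 2 * θ * deriv (deriv f) θ + (1 - Real.sqrt θ) * deriv f θ := by
  have hc : ConvexOn ℝ (Ioi 1) (hh f) := by
    refine ⟨convex_Ioi 1, ?_⟩
    intro x hx y hy a b ha hb hab
    have hx : (1:ℝ) < x := hx
    have hy : (1:ℝ) < y := hy
    have e : ∀ t : ℝ, diag2 x 1 + t • vecMulVec ![y - x, 0] ![1, 0] = diag2 ((1 - t) * x + t * y) 1 := by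
      intro t
      ext i j
      fin_cases i <;> fin_cases j <;> simp [diag2, vecMulVec_apply]; ring
    have ex : diag2 x 1 + vecMulVec ![y - x, 0] ![1, 0] = diag2 y 1 := by
      have := e 1
      rw [one_smul] at this
      rw [this]; simp
    have := h (diag2 x 1) (by simp [diag2, Matrix.det_fin_two]; linarith) ![y - x, 0] ![1, 0] a
      ⟨ha, by linarith⟩ (by
        intro t ht
        rw [e]
        simp only [diag2, Matrix.det_fin_two_of]
        nlinarith [ht.1, ht.2, mul_nonneg ht.1 (by linarith : 0 ≤ y - 1),
          mul_nonneg (by linarith [ht.2] : 0 ≤ 1 - t) (by linarith : 0 ≤ x - 1)])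
    have hb' : b = 1 - a := by linarith
    have hz : 1 ≤ a * x + b * y := by
      nlinarith [mul_nonneg ha (by linarith : 0 ≤ x - 1), mul_nonneg hb (by linarith : 0 ≤ y - 1)]
    rw [e, ex, ← hb', W_diag W f hf x hx.le, W_diag W f hf y hy.le,
      show (1 - b) = a by linarith, W_diag W f hf _ hz] at this
    simpa using this
  have hm : MonotoneOn (deriv (hh f)) (Ioi 1) :=
    hc.monotoneOn_deriv (fun t ht => (hh_d1 f hC2 t ht).differentiableAt)
  intro θ hθ
  have hs := Real.sqrt_pos.2 hθ
  have ht : 1 < Real.exp (Real.sqrt θ) := Real.one_lt_exp_iff.2 hs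
  have h2 := hh_d2 f hC2 _ ht
  rw [Real.log_exp, Real.sq_sqrt hθ.le] at h2
  have hnn : 0 ≤ derivWithin (deriv (hh f)) (Ioi 1) (Real.exp (Real.sqrt θ)) := hm.derivWithin_nonneg
  rw [derivWithin_of_isOpen isOpen_Ioi ht, h2.deriv] at hnn
  exact (mul_nonneg_iff_of_pos_left (by positivity)).1 hnn

lemma quad_lin {a b x y s t : ℝ} (ha : 0 ≤ a) (hb : 0 ≤ b) (hs : 0 < s) (ht : 0 < t)
    (hd : 0 < a * s + b * t) :
    (a * x + b * y) ^ 2 / (a * s + b * t) ≤ a * (x ^ 2 / s) + b * (y ^ 2 / t) := by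
  rw [div_le_iff₀ hd]
  have : (a * (x ^ 2 / s) + b * (y ^ 2 / t)) * (a * s + b * t) - (a * x + b * y) ^ 2
      = a * b * (x * t - y * s) ^ 2 / (s * t) := by
    field_simp; ring
  have h2 : 0 ≤ a * b * (x * t - y * s) ^ 2 / (s * t) := by positivity
  linarith

lemma iii_imp (W : Mat2 → ℝ)
    (hOI : ObjectiveIsotropic W) (hIso : Isochoric W)
    (f : ℝ → ℝ) (hf : ∀ θ : ℝ, f θ = W (diag2 (Real.exp (Real.sqrt θ)) 1))
    (hC2 : ContDiffOn ℝ 2 f (Set.Ici (0:ℝ)))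
    (h : ∀ θ : ℝ, 0 < θ → 0 ≤ 2 * θ * deriv (deriv f) θ + (1 - Real.sqrt θ) * deriv f θ) :
    Polyconvex W := by
  have hc := hh_conv f hC2 h
  have hm := hh_mono f hC2 hc
  classical
  let P : Mat2 × ℝ → EReal := fun z =>
    if 0 < z.2 then ((hh f (max 1 (nn z.1 ^ 2 / z.2)) : ℝ) : EReal) else ⊤
  have hbot : ∀ z, P z ≠ ⊥ := by
    intro z
    by_cases hz : 0 < z.2
    · simp [P, hz]
    · simp [P, hz]
  have hmulbot : ∀ z (a : ℝ), 0 ≤ a → (a : EReal) * P z ≠ ⊥ := by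
    intro z a ha
    by_cases hz : 0 < z.2
    · simp only [P, hz, if_true]
      rw [← EReal.coe_mul]
      exact EReal.coe_ne_bot _
    · simp only [P, hz, if_false]
      rcases ha.eq_or_lt with rfl | ha
      · simp
      · rw [EReal.coe_mul_top_of_pos ha]; simp
  refine ⟨P, ?_, ?_⟩
  · intro x y a b ha hb hab
    rcases ha.eq_or_lt with rfl | ha'
    · have : b = 1 := by linarith
      subst this
      simp
    rcases hb.eq_or_lt with rfl | hb'
    · have : a = 1 := by linarith
      subst this
      simp
    by_cases hx : 0 < x.2
    swap
    · have : P x = ⊤ := by simp only [P, hx, if_false]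
      rw [this, EReal.coe_mul_top_of_pos ha', EReal.top_add_of_ne_bot (hmulbot y b hb)]
      exact le_top
    by_cases hy : 0 < y.2
    swap
    · have : P y = ⊤ := by simp only [P, hy, if_false]
      rw [this, EReal.coe_mul_top_of_pos hb', EReal.add_top_of_ne_bot (hmulbot x a ha)]
      exact le_top
    have hxy : 0 < a * x.2 + b * y.2 := by positivity
    have hxy' : 0 < (a • x + b • y).2 := by simpa using hxy
    simp only [P, hx, hy, hxy', if_true]
    rw [← EReal.coe_mul, ← EReal.coe_mul, ← EReal.coe_add, EReal.coe_le_coe_iff]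
    have hn := nn_convex x.1 y.1 a b ha hb
    set s := nn x.1 ^ 2 / x.2
    set t := nn y.1 ^ 2 / y.2
    have h1 : nn (a • x + b • y).1 ^ 2 / (a • x + b • y).2 ≤ a * s + b * t := by
      simp only [Prod.fst_add, Prod.snd_add, Prod.smul_fst, Prod.smul_snd, smul_eq_mul]
      refine le_trans ?_ (quad_lin ha hb hx hy hxy)
      have := nn_nonneg (a • x.1 + b • y.1)
      gcongr
    have h2 : max 1 (nn (a • x + b • y).1 ^ 2 / (a • x + b • y).2)
        ≤ a * max 1 s + b * max 1 t := by
      have q1 := mul_le_mul_of_nonneg_left (le_max_left 1 s) ha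
      have q2 := mul_le_mul_of_nonneg_left (le_max_left 1 t) hb
      have q3 := mul_le_mul_of_nonneg_left (le_max_right 1 s) ha
      have q4 := mul_le_mul_of_nonneg_left (le_max_right 1 t) hb
      apply max_le <;> linarith
    have h3 := hm (mem_Ici.2 (le_max_left _ _)) (mem_Ici.2 (le_trans (le_max_left _ _) h2)) h2
    refine h3.trans ?_
    simpa using hc.2 (mem_Ici.2 (le_max_left 1 s)) (mem_Ici.2 (le_max_left 1 t)) ha hb hab
  · intro F hF
    obtain ⟨h1, h2⟩ := W_eq W hOI hIso f hf F hF
    simp only [P, hF, if_true]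
    rw [max_eq_right h1, h2]

/-- for objective, isotropic, isochoric `W` with
`f(θ) = W(diag(exp √θ, 1))` twice continuously differentiable on `[0,∞)`,
polyconvexity, rank-one convexity and the differential inequality
`2θf''(θ) + (1−√θ)f'(θ) ≥ 0` for all `θ > 0` are equivalent. -/
theorem isochoric_tfae_logSq (W : Mat2 → ℝ)
    (hOI : ObjectiveIsotropic W) (hIso : Isochoric W)
    (f : ℝ → ℝ) (hf : ∀ θ : ℝ, f θ = W (diag2 (Real.exp (Real.sqrt θ)) 1))
    (hC2 : ContDiffOn ℝ 2 f (Set.Ici (0:ℝ))) :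
    List.TFAE
      [Polyconvex W,
       RankOneConvex W,
       ∀ θ : ℝ, 0 < θ →
         0 ≤ 2 * θ * deriv (deriv f) θ + (1 - Real.sqrt θ) * deriv f θ] := by
  tfae_have 1 → 2 := poly_imp W
  tfae_have 2 → 3 := rank_imp W f hf hC2
  tfae_have 3 → 1 := iii_imp W hOI hIso f hf hC2
  tfae_finish
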